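/- Let m ≥ 3 and let a_1,…,a_m ∈ T, where T = {t·(cos φ, sin φ) : t ≥ 0, φ ∈ (0, π]} is the upper half-plane excluding the positive x-axis. Set A = [a_1,…,a_m]ᵀ ∈ ℝ^{m×2} and e_j = f(a_j). Then the following are equivalent: (1) ∑_{j=1}^m a_j a_jᵀ is a positive scalar multiple of I₂ and β_A = inf{β_M : M ∈ ℝ^{m×2}} (i.e. {a_1,…,a_m} is an optimal tight frame); (2) (e_1,…,e_m) is an optimal edge family of size m. Moreover, in either case β_A = (1 − 2·r(e))^{−1/2}. -/

import Mathlib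

noncomputable section

open Real
open scoped RealInnerProductSpace ENNReal

/-- ℝ² as a Euclidean space. -/
abbrev E2 : Type := EuclideanSpace ℝ (Fin 2)

/-- The vector `(x, y)` in ℝ². -/
def vec2 (x y : ℝ) : E2 := (WithLp.equiv 2 (Fin 2 → ℝ)).symm ![x, y]

/-- The coordinates of a vector in ℝ². -/
def toFun2 (v : E2) : Fin 2 → ℝ := WithLp.equiv 2 (Fin 2 → ℝ) v

/-- The phaseless measurement map `Φ_A(x) = (|⟨a_j, x⟩|)_j`. -/
def PhiMap {m : ℕ} (a : Fin m → E2) (x : E2) : EuclideanSpace ℝ (Fin m) :=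
  (WithLp.equiv 2 (Fin m → ℝ)).symm fun j => |⟪a j, x⟫|

/-- The distance `dist(x,y) = min ‖x − y‖ ‖x + y‖` (real phase retrieval distance). -/
def pdist (x y : E2) : ℝ := min ‖x - y‖ ‖x + y‖

/-- The set of Lipschitz ratios of the phaseless measurement map. -/
def ratioSet {m : ℕ} (a : Fin m → E2) : Set ℝ :=
  {r | ∃ x y : E2, pdist x y ≠ 0 ∧ r = ‖PhiMap a x - PhiMap a y‖ / pdist x y}

/-- The optimal lower Lipschitz constant `L_A`. -/
def lipL {m : ℕ} (a : Fin m → E2) : ℝ := sInf (ratioSet a)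

/-- The optimal upper Lipschitz constant `U_A`. -/
def lipU {m : ℕ} (a : Fin m → E2) : ℝ := sSup (ratioSet a)

/-- The condition number `β_A = U_A / L_A`, with `β_A = +∞` when `L_A = 0`. -/
def condNum {m : ℕ} (a : Fin m → E2) : ℝ≥0∞ :=
  if lipL a = 0 then ⊤ else ENNReal.ofReal (lipU a / lipL a)

/-- An edge family: nonzero vectors with pairwise distinct directions summing to zero
(the edge vectors of a strictly convex polygon). -/
def IsEdgeFamily {m : ℕ} (e : Fin m → E2) : Prop :=
  (∀ j, e j ≠ 0) ∧
  (∀ i j : Fin m, i ≠ j → ‖e i‖⁻¹ • e i ≠ ‖e j‖⁻¹ • e j) ∧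
  ∑ j, e j = 0

/-- The diameter-to-perimeter ratio of the polygon with edge vectors `e`. -/
def rRatio {m : ℕ} (e : Fin m → E2) : ℝ :=
  sSup {s | ∃ u : E2, ‖u‖ = 1 ∧ s = ∑ j, |⟪e j, u⟫|} / (2 * ∑ j, ‖e j‖)

/-- An optimal edge family: minimizes `rRatio` among all edge families of size `m`. -/
def IsOptimalEdgeFamily {m : ℕ} (e : Fin m → E2) : Prop :=
  IsEdgeFamily e ∧ ∀ e' : Fin m → E2, IsEdgeFamily e' → rRatio e ≤ rRatio e'

/-- The complex square map on ℝ² ≅ ℂ: `f(t·(cos φ, sin φ)) = t²·(cos 2φ, sin 2φ)`. -/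
def csq (v : E2) : E2 :=
  vec2 (toFun2 v 0 ^ 2 - toFun2 v 1 ^ 2) (2 * toFun2 v 0 * toFun2 v 1)

/-- The harmonic frame `E_m`: the `j`-th row is `(cos((j−1)π/m), sin((j−1)π/m))`, `j = 1,…,m`. -/
def harmonicFrame (m : ℕ) : Fin m → E2 :=
  fun j => vec2 (Real.cos ((j : ℕ) * π / m)) (Real.sin ((j : ℕ) * π / m))


lemma in2 (x y : E2) : ⟪x, y⟫ = x 0 * y 0 + x 1 * y 1 := by
  simp [PiLp.inner_apply, Fin.sum_univ_two, mul_comm]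

lemma nsq (x : E2) : ‖x‖ ^ 2 = x 0 ^ 2 + x 1 ^ 2 := by
  simp [EuclideanSpace.norm_sq_eq, Fin.sum_univ_two]

@[simp] lemma vec2_0 (x y : ℝ) : (vec2 x y) 0 = x := by simp [vec2]
@[simp] lemma vec2_1 (x y : ℝ) : (vec2 x y) 1 = y := by simp [vec2]
@[simp] lemma csq_0 (v : E2) : (csq v) 0 = v 0 ^ 2 - v 1 ^ 2 := by simp [csq, toFun2]
@[simp] lemma csq_1 (v : E2) : (csq v) 1 = 2 * v 0 * v 1 := by simp [csq, toFun2]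

lemma E2_ext {x y : E2} (h0 : x 0 = y 0) (h1 : x 1 = y 1) : x = y := by
  ext i; fin_cases i <;> assumption

lemma csq_norm (v : E2) : ‖csq v‖ = ‖v‖ ^ 2 := by
  have h : ‖csq v‖ ^ 2 = (‖v‖ ^ 2) ^ 2 := by
    rw [nsq, nsq]; simp; ring
  exact (sq_eq_sq₀ (norm_nonneg _) (by positivity)).1 h

lemma csq_inner (b u : E2) : ⟪b, u⟫ ^ 2 = (‖csq b‖ * ‖u‖ ^ 2 + ⟪csq b, csq u⟫) / 2 := by
  rw [csq_norm, nsq, nsq, in2, in2]; simp; ring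

lemma csq_surj (w : E2) : ∃ b, csq b = w := by
  obtain ⟨z, hz⟩ := IsAlgClosed.exists_pow_nat_eq (⟨w 0, w 1⟩ : ℂ) (n := 2) (by norm_num)
  refine ⟨vec2 z.re z.im, E2_ext ?_ ?_⟩
  · have := congrArg Complex.re hz
    simp [pow_two] at this
    simp; linarith
  · have := congrArg Complex.im hz
    simp [pow_two] at this
    simp; linarith

def Wf {m : ℕ} (e : Fin m → E2) (u : E2) : ℝ := ∑ j, |⟪e j, u⟫|
def Df {m : ℕ} (e : Fin m → E2) : ℝ := sSup {s | ∃ u : E2, ‖u‖ = 1 ∧ s = ∑ j, |⟪e j, u⟫|}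
def Pf {m : ℕ} (e : Fin m → E2) : ℝ := ∑ j, ‖e j‖

lemma Wf_le_Pf {m : ℕ} (e : Fin m → E2) (u : E2) : Wf e u ≤ Pf e * ‖u‖ := by
  unfold Wf Pf
  rw [Finset.sum_mul]
  exact Finset.sum_le_sum fun j _ => abs_real_inner_le_norm _ _

lemma Dset_bdd {m : ℕ} (e : Fin m → E2) :
    BddAbove {s | ∃ u : E2, ‖u‖ = 1 ∧ s = ∑ j, |⟪e j, u⟫|} := by
  refine ⟨Pf e, ?_⟩
  rintro s ⟨u, hu, rfl⟩
  have := Wf_le_Pf e u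
  rw [hu, mul_one] at this
  exact this

lemma unit_ex : ‖vec2 1 0‖ = 1 := by
  have := nsq (vec2 1 0)
  simp at this
  rcases this with h | h
  · exact h
  · linarith [norm_nonneg (vec2 1 0)]

lemma Dset_ne {m : ℕ} (e : Fin m → E2) :
    {s | ∃ u : E2, ‖u‖ = 1 ∧ s = ∑ j, |⟪e j, u⟫|}.Nonempty :=
  ⟨_, vec2 1 0, unit_ex, rfl⟩

lemma Wf_le_Df {m : ℕ} (e : Fin m → E2) (v : E2) : Wf e v ≤ Df e * ‖v‖ := by
  by_cases h : v = 0
  · subst h; simp [Wf]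
  have hv : 0 < ‖v‖ := norm_pos_iff.2 h
  have h1 : Wf e (‖v‖⁻¹ • v) ≤ Df e :=
    le_csSup (Dset_bdd e) ⟨_, by simp [norm_smul, hv.ne'], rfl⟩
  have h2 : Wf e (‖v‖⁻¹ • v) = ‖v‖⁻¹ * Wf e v := by
    unfold Wf
    rw [Finset.mul_sum]
    refine Finset.sum_congr rfl fun j _ => ?_
    rw [inner_smul_right, abs_mul, abs_of_pos (inv_pos.2 hv)]
  rw [h2, inv_mul_le_iff₀ hv] at h1
  linarith

lemma Df_le {m : ℕ} (e : Fin m → E2) (K : ℝ) (h : ∀ u, ‖u‖ = 1 → Wf e u ≤ K) : Df e ≤ K := by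
  apply csSup_le (Dset_ne e)
  rintro s ⟨u, hu, rfl⟩
  exact h u hu

lemma Df_nonneg {m : ℕ} (e : Fin m → E2) : 0 ≤ Df e := by
  have := Wf_le_Df e (vec2 1 0)
  rw [unit_ex, mul_one] at this
  exact le_trans (Finset.sum_nonneg fun j _ => abs_nonneg _) this

lemma Df_le_Pf {m : ℕ} (e : Fin m → E2) : Df e ≤ Pf e :=
  Df_le e _ fun u hu => by simpa [hu] using Wf_le_Pf e u

lemma rR {m : ℕ} (e : Fin m → E2) : 2 * rRatio e = Df e / Pf e := by
  have : rRatio e = Df e / (2 * Pf e) := rfl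
  rw [this]
  by_cases h : Pf e = 0
  · simp [h]
  · field_simp

/-- the two-term splitting identity -/
lemma split_abs (s h u : E2) :
    |⟪(1/2 : ℝ) • s + h, u⟫| + |⟪(1/2 : ℝ) • s - h, u⟫| = max |⟪s, u⟫| (2 * |⟪h, u⟫|) := by
  rw [inner_add_left, inner_sub_left, inner_smul_left]
  simp only [conj_trivial]
  generalize ⟪s, u⟫ = p
  generalize ⟪h, u⟫ = q
  rcases max_cases |p| (2 * |q|) with ⟨h1, h2⟩ | ⟨h1, h2⟩ <;> rw [h1] <;>
  rcases abs_cases p with ⟨h3, h4⟩ | ⟨h3, h4⟩ <;>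
  rcases abs_cases q with ⟨h5, h6⟩ | ⟨h5, h6⟩ <;>
  rcases abs_cases (1/2 * p + q) with ⟨h7, h8⟩ | ⟨h7, h8⟩ <;>
  rcases abs_cases (1/2 * p - q) with ⟨h9, h10⟩ | ⟨h9, h10⟩ <;> linarith

lemma sum_two {m : ℕ} {M : Type*} [AddCommMonoid M] (f : Fin m → M) {i j : Fin m} (hij : i ≠ j) :
    ∑ l, f l = (f i + f j) + ∑ l ∈ (Finset.univ.erase i).erase j, f l := by
  rw [add_assoc, Finset.add_sum_erase _ _ (by simp [hij.symm]), Finset.add_sum_erase _ _ (by simp)]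

set_option maxHeartbeats 1000000 in
lemma improve {m : ℕ} (e : Fin m → E2) {i j : Fin m} (hij : i ≠ j)
    (hr : SameRay ℝ (e i) (e j)) (hs : e i + e j ≠ 0) (h0 : ∑ l, e l = 0) :
    ∃ e' : Fin m → E2, ∑ l, e' l = 0 ∧ Pf e < Pf e' ∧ Df e' ≤ Df e := by
  set s := e i + e j with hsdef
  set c := ‖s‖ with hc
  have hcpos : 0 < c := norm_pos_iff.2 hs
  set J := (Finset.univ.erase i).erase j with hJ
  set R : E2 → ℝ := fun u => ∑ l ∈ J, |⟪e l, u⟫| with hR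
  have hnorm : ‖e i‖ + ‖e j‖ = c := hr.norm_add.symm
  have habs : ∀ u, |⟪e i, u⟫| + |⟪e j, u⟫| = |⟪s, u⟫| := by
    intro u
    obtain ⟨w, p, q, hp, hq, -, h1, h2⟩ := hr.exists_eq_smul
    rw [hsdef, h1, h2, ← add_smul, inner_smul_left, inner_smul_left, inner_smul_left]
    simp only [conj_trivial, abs_mul, abs_of_nonneg hp, abs_of_nonneg hq,
      abs_of_nonneg (add_nonneg hp hq)]
    ring
  have hW : ∀ u, Wf e u = |⟪s, u⟫| + R u := by
    intro u
    rw [← habs u]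
    exact sum_two (fun l => |⟪e l, u⟫|) hij
  have hPge : ∀ u, R u ≤ Pf e * ‖u‖ := fun u => by
    have := Wf_le_Pf e u
    rw [hW] at this
    linarith [abs_nonneg ⟪s, u⟫]
  have hPc : c ≤ Pf e := by
    unfold Pf
    rw [sum_two _ hij, hnorm]
    linarith [Finset.sum_nonneg (s := J) (fun l _ => norm_nonneg (e l))]
  -- orthonormal frame
  set p : E2 := c⁻¹ • s with hp
  set n : E2 := vec2 (- p 1) (p 0) with hn
  have hpn : ‖p‖ = 1 := by rw [hp, norm_smul, norm_inv, norm_norm]; exact inv_mul_cancel₀ hcpos.ne'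
  have hp2 : p 0 ^ 2 + p 1 ^ 2 = 1 := by rw [← nsq, hpn]; norm_num
  have hsp : s = c • p := by rw [hp, smul_smul, mul_inv_cancel₀ hcpos.ne', one_smul]
  have hnn : ‖n‖ = 1 := by
    have : ‖n‖ ^ 2 = 1 := by rw [nsq]; simp [hn]; linarith
    nlinarith [norm_nonneg n]
  have hpn0 : ⟪p, n⟫ = 0 := by rw [in2]; simp [hn]; ring
  have hnp0 : ⟪n, p⟫ = 0 := by rw [in2]; simp [hn]; ring
  have hpp : ⟪p, p⟫ = 1 := by rw [real_inner_self_eq_norm_sq, hpn]; norm_num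
  have hnn' : ⟪n, n⟫ = 1 := by rw [real_inner_self_eq_norm_sq, hnn]; norm_num
  have hdec : ∀ u : E2, u = ⟪n, u⟫ • n + ⟪p, u⟫ • p := by
    intro u
    apply E2_ext
    · simp [in2, hn]; linear_combination (-u 0) * hp2
    · simp [in2, hn]; linear_combination (-u 1) * hp2
  have hRsub : ∀ (α β : ℝ), R (α • n + β • p) ≤ |α| * R n + |β| * R p := by
    intro α β
    simp only [hR, Finset.mul_sum]
    rw [← Finset.sum_add_distrib]
    refine Finset.sum_le_sum fun l _ => ?_
    rw [inner_add_right, inner_smul_right, inner_smul_right, ← abs_mul, ← abs_mul]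
    exact abs_add_le _ _
  have hRn0 : 0 ≤ R n := Finset.sum_nonneg fun _ _ => abs_nonneg _
  have hgap : R n < Df e := by
    -- D^2 ≥ R(n)^2 + c^2
    have key : ∀ t : ℝ, t ^ 2 = c ^ 2 → ‖R n • n + t • p‖ ^ 2 = R n ^ 2 + c ^ 2 := by
      intro t ht
      rw [← real_inner_self_eq_norm_sq]
      simp only [inner_add_left, inner_add_right, inner_smul_left, inner_smul_right, hpn0, hnp0,
        hpp, hnn', conj_trivial]
      linear_combination ht
    have k1 := key c rfl
    have k2 := key (-c) (by ring)
    have hq : 0 < R n ^ 2 + c ^ 2 := by positivity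
    set q := Real.sqrt (R n ^ 2 + c ^ 2) with hqdef
    have hq2 : q ^ 2 = R n ^ 2 + c ^ 2 := Real.sq_sqrt hq.le
    have hqpos : 0 < q := Real.sqrt_pos.2 hq
    have n1 : ‖R n • n + c • p‖ = q := by
      rw [hqdef, ← k1, Real.sqrt_sq (norm_nonneg _)]
    have n2 : ‖R n • n + (-c) • p‖ = q := by
      rw [hqdef, ← k2, Real.sqrt_sq (norm_nonneg _)]
    have w1 := Wf_le_Df e (R n • n + c • p)
    have w2 := Wf_le_Df e (R n • n + (-c) • p)
    rw [n1, hW] at w1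
    rw [n2, hW] at w2
    have s1 : |⟪s, R n • n + c • p⟫| = c ^ 2 := by
      rw [hsp, inner_smul_left, inner_add_right, inner_smul_right, inner_smul_right, hpn0, hpp]
      simp [pow_two]
    have s2 : |⟪s, R n • n + (-c) • p⟫| = c ^ 2 := by
      rw [hsp, inner_smul_left, inner_add_right, inner_smul_right, inner_smul_right, hpn0, hpp]
      simp [pow_two]
    have s3 : 2 * (R n * R n) ≤ R (R n • n + c • p) + R (R n • n + (-c) • p) := by
      have : 2 * (R n * R n) = ∑ l ∈ J, 2 * (R n * |⟪e l, n⟫|) := by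
        rw [← Finset.mul_sum, ← Finset.mul_sum]
      rw [this]
      simp only [hR]
      rw [← Finset.sum_add_distrib]
      refine Finset.sum_le_sum fun l _ => ?_
      change 2 * (R n * |⟪e l, n⟫|) ≤ |⟪e l, R n • n + c • p⟫| + |⟪e l, R n • n + (-c) • p⟫|
      rw [inner_add_right, inner_add_right, inner_smul_right _ n, inner_smul_right _ p c,
        inner_smul_right _ p (-c)]
      have : R n * |⟪e l, n⟫| = |R n * ⟪e l, n⟫| := by rw [abs_mul, abs_of_nonneg hRn0]
      rw [this]
      have t := abs_add_le (R n * ⟪e l, n⟫ + c * ⟪e l, p⟫) (R n * ⟪e l, n⟫ + -c * ⟪e l, p⟫)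
      have t2 : (R n * ⟪e l, n⟫ + c * ⟪e l, p⟫) + (R n * ⟪e l, n⟫ + -c * ⟪e l, p⟫)
        = 2 * (R n * ⟪e l, n⟫) := by ring
      rw [t2, abs_mul, abs_two] at t
      exact t
    have hDq : q ≤ Df e := by
      have : q * q ≤ Df e * q := by nlinarith
      exact le_of_mul_le_mul_right this hqpos
    have : R n < q := by
      rw [hqdef]; apply Real.lt_sqrt_of_sq_lt; nlinarith
    linarith
  -- choose η
  set η := (Df e - R n) / (2 * Pf e / c + 2) with hη
  have hPpos : 0 < Pf e := lt_of_lt_of_le hcpos hPc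
  have hden : 0 < 2 * Pf e / c + 2 := by positivity
  have hηpos : 0 < η := div_pos (by linarith) hden
  have hηeq : η * (2 * Pf e / c + 2) = Df e - R n := by rw [hη]; field_simp
  set h := η • n with hh
  set e' : Fin m → E2 := Function.update (Function.update e i ((1/2 : ℝ) • s + h)) j
    ((1/2 : ℝ) • s - h) with he'
  have ei : e' i = (1/2 : ℝ) • s + h := by
    rw [he', Function.update_of_ne hij, Function.update_self]
  have ej : e' j = (1/2 : ℝ) • s - h := by rw [he', Function.update_self]
  have el : ∀ l ∈ J, e' l = e l := by
    intro l hl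
    simp only [hJ, Finset.mem_erase, Finset.mem_univ, and_true] at hl
    rw [he', Function.update_of_ne hl.1, Function.update_of_ne hl.2]
  refine ⟨e', ?_, ?_, ?_⟩
  · rw [sum_two _ hij, ei, ej, Finset.sum_congr rfl el, ← h0, sum_two e hij, ← hsdef]
    congr 1
    module
  · unfold Pf
    rw [sum_two _ hij, sum_two (fun l => ‖e' l‖) hij, ei, ej, hnorm,
      Finset.sum_congr rfl (fun l hl => by rw [el l hl] : ∀ l ∈ J, ‖e' l‖ = ‖e l‖)]
    have key : ∀ t : ℝ, t ^ 2 = η ^ 2 → c / 2 < ‖(1/2 : ℝ) • s + t • n‖ := by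
      intro t ht
      have : ‖(1/2 : ℝ) • s + t • n‖ ^ 2 = (c / 2) ^ 2 + η ^ 2 := by
        rw [← real_inner_self_eq_norm_sq, hsp]
        simp only [inner_add_left, inner_add_right, inner_smul_left, inner_smul_right, hpn0, hnp0,
          hpp, hnn', conj_trivial]
        linear_combination ht
      apply lt_of_pow_lt_pow_left₀ 2 (norm_nonneg _)
      rw [this]; nlinarith
    have k1 := key η rfl
    have k2 := key (-η) (by ring)
    have : (1/2 : ℝ) • s - h = (1/2 : ℝ) • s + (-η) • n := by rw [hh]; module
    rw [this]
    linarith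
  · apply Df_le
    intro u hu
    have hWu : Wf e' u = max |⟪s, u⟫| (2 * |⟪h, u⟫|) + R u := by
      unfold Wf
      rw [sum_two _ hij, ei, ej, split_abs,
        Finset.sum_congr rfl (fun l hl => by rw [el l hl] : ∀ l ∈ J, |⟪e' l, u⟫| = |⟪e l, u⟫|)]
    rw [hWu]
    rcases le_total (2 * |⟪h, u⟫|) |⟪s, u⟫| with hle | hle
    · rw [max_eq_left hle, ← hW]
      simpa [hu] using Wf_le_Df e u
    · rw [max_eq_right hle]
      have hα : |⟪n, u⟫| ≤ 1 := by
        simpa [hu, hnn] using abs_real_inner_le_norm n u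
      have h1 : |⟪h, u⟫| = η * |⟪n, u⟫| := by
        rw [hh, inner_smul_left, abs_mul]; simp [abs_of_pos hηpos]
      have h2 : |⟪s, u⟫| = c * |⟪p, u⟫| := by
        rw [hsp, inner_smul_left, abs_mul]; simp [abs_of_pos hcpos]
      have hβ : |⟪p, u⟫| ≤ 2 * η / c := by
        rw [le_div_iff₀ hcpos]
        rw [h1, h2] at hle
        nlinarith
      have h3 := hRsub ⟪n, u⟫ ⟪p, u⟫
      rw [← hdec u] at h3
      have h4 := hPge p
      rw [hpn, mul_one] at h4
      have h5 : |⟪p, u⟫| * R p ≤ 2 * η / c * Pf e :=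
        mul_le_mul hβ h4 (Finset.sum_nonneg fun _ _ => abs_nonneg _) (by positivity)
      have h6 : η * (2 * Pf e / c + 2) = 2 * η / c * Pf e + 2 * η := by field_simp
      rw [h1]
      nlinarith [abs_nonneg ⟪n, u⟫]

lemma Df_pos {m : ℕ} (e : Fin m → E2) (hP : 0 < Pf e) : 0 < Df e := by
  by_contra hD
  have hD : Df e ≤ 0 := not_lt.1 hD
  have : Pf e ≤ 0 := by
    apply Finset.sum_nonpos
    intro j _
    have h1 := Wf_le_Df e (e j)
    have h2 : |⟪e j, e j⟫| ≤ Wf e (e j) :=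
      Finset.single_le_sum (f := fun l => |⟪e l, e j⟫|) (fun l _ => abs_nonneg _)
        (Finset.mem_univ j)
    rw [real_inner_self_eq_norm_sq, abs_of_nonneg (by positivity)] at h2
    nlinarith [norm_nonneg (e j)]
  linarith

lemma edge_of_min {m : ℕ} (e : Fin m → E2) (h0 : ∑ l, e l = 0) (hP : 0 < Pf e)
    (hmin : ∀ e' : Fin m → E2, ∑ l, e' l = 0 → 0 < Pf e' → Df e / Pf e ≤ Df e' / Pf e') :
    IsEdgeFamily e := by
  have key : ∀ i j : Fin m, i ≠ j → SameRay ℝ (e i) (e j) → e i + e j ≠ 0 → False := by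
    intro i j hij hr hs
    obtain ⟨e', h1, h2, h3⟩ := improve e hij hr hs h0
    have h4 := hmin e' h1 (by linarith)
    have hD := Df_pos e hP
    have hP' : 0 < Pf e' := by linarith
    rw [div_le_div_iff₀ hP hP'] at h4
    nlinarith [Pf e]
  have hne : ∀ j, e j ≠ 0 := by
    intro i hi
    obtain ⟨j, hj⟩ : ∃ j, e j ≠ 0 := by
      by_contra hcon
      push Not at hcon
      simp [Pf, hcon] at hP
    refine key i j ?_ ?_ ?_
    · rintro rfl; exact hj hi
    · rw [hi]; exact SameRay.zero_left _
    · simpa [hi] using hj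
  refine ⟨hne, ?_, h0⟩
  intro i j hij heq
  have hr := (sameRay_iff_inv_norm_smul_eq_of_ne (hne i) (hne j)).2 heq
  refine key i j hij hr ?_
  intro hs
  have := hr.norm_add
  rw [hs, norm_zero] at this
  have := norm_pos_iff.2 (hne i)
  linarith [norm_nonneg (e j)]

lemma Df_smul_le {m : ℕ} (e : Fin m → E2) (c : ℝ) (hc : 0 ≤ c) :
    Df (fun j => c • e j) ≤ c * Df e := by
  apply Df_le
  intro u hu
  have h : Wf (fun j => c • e j) u = c * Wf e u := by
    unfold Wf
    rw [Finset.mul_sum]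
    refine Finset.sum_congr rfl fun j _ => ?_
    rw [inner_smul_left, abs_mul]; simp [abs_of_nonneg hc]
  rw [h]
  have := Wf_le_Df e u
  rw [hu, mul_one] at this
  exact mul_le_mul_of_nonneg_left this hc

lemma Pf_smul {m : ℕ} (e : Fin m → E2) (c : ℝ) (hc : 0 ≤ c) :
    Pf (fun j => c • e j) = c * Pf e := by
  simp [Pf, norm_smul, Finset.mul_sum, abs_of_nonneg hc]

lemma exists_min {m : ℕ} (hm : 3 ≤ m) : ∃ e : Fin m → E2, ∑ l, e l = 0 ∧ 0 < Pf e ∧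
    ∀ e' : Fin m → E2, ∑ l, e' l = 0 → 0 < Pf e' → Df e / Pf e ≤ Df e' / Pf e' := by
  set K : Set (Fin m → E2) := {e | ∑ l, e l = 0 ∧ Pf e = 1} with hK
  have norml : ∀ e : Fin m → E2, ∑ l, e l = 0 → 0 < Pf e → (fun j => (Pf e)⁻¹ • e j) ∈ K := by
    intro e h0 hP
    refine ⟨by rw [← Finset.smul_sum, h0, smul_zero], ?_⟩
    rw [Pf_smul _ _ (by positivity), inv_mul_cancel₀ hP.ne']
  have hKne : K.Nonempty := by
    let i : Fin m := ⟨0, by omega⟩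
    let j : Fin m := ⟨1, by omega⟩
    have hij : i ≠ j := by simp [i, j, Fin.ext_iff]
    let e : Fin m → E2 := Function.update (Function.update 0 i (vec2 1 0)) j (-vec2 1 0)
    have ei : e i = vec2 1 0 := by simp [e, Function.update_of_ne hij]
    have ej : e j = -vec2 1 0 := by simp [e]
    refine ⟨_, norml e ?_ ?_⟩
    · rw [sum_two _ hij, ei, ej]
      rw [Finset.sum_eq_zero]
      · simp
      · intro l hl
        simp only [Finset.mem_erase, Finset.mem_univ, and_true] at hl
        simp [e, Function.update_of_ne hl.1, Function.update_of_ne hl.2]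
    · unfold Pf
      rw [sum_two _ hij, ei, ej, norm_neg, unit_ex]
      have := Finset.sum_nonneg (s := (Finset.univ.erase i).erase j) (fun l _ => norm_nonneg (e l))
      linarith
  have hKc : IsCompact K := by
    apply Metric.isCompact_of_isClosed_isBounded
    · apply IsClosed.inter
      · exact isClosed_eq (by fun_prop) continuous_const
      · exact isClosed_eq (by unfold Pf; fun_prop) continuous_const
    · refine (Metric.isBounded_closedBall (x := (0 : Fin m → E2)) (r := 1)).subset ?_
      rintro e ⟨-, he⟩
      rw [mem_closedBall_zero_iff, pi_norm_le_iff_of_nonneg zero_le_one]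
      intro j
      rw [← he]
      exact Finset.single_le_sum (f := fun l => ‖e l‖) (fun l _ => norm_nonneg _)
        (Finset.mem_univ j)
  have hlsc : LowerSemicontinuousOn (fun e : Fin m → E2 => Df e) K := by
    intro e _ y hy
    obtain ⟨s, ⟨u, hu, rfl⟩, hs⟩ := exists_lt_of_lt_csSup (Dset_ne e) hy
    have hcont : Continuous (fun e : Fin m → E2 => ∑ j, |⟪e j, u⟫|) := by fun_prop
    have := (hcont.tendsto e).eventually_const_lt hs
    refine (this.filter_mono nhdsWithin_le_nhds).mono fun e' he' => ?_
    have h := Wf_le_Df e' u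
    rw [hu, mul_one] at h
    exact lt_of_lt_of_le he' h
  obtain ⟨e, heK, hmin⟩ := hlsc.exists_isMinOn hKne hKc
  refine ⟨e, heK.1, by rw [heK.2]; norm_num, ?_⟩
  intro e' h0 hP
  rw [heK.2, div_one]
  have h1 := isMinOn_iff.1 hmin _ (norml e' h0 hP)
  have h2 := Df_smul_le e' (Pf e')⁻¹ (by positivity)
  rw [inv_mul_eq_div] at h2
  exact h1.trans h2

/-! Lipschitz constants -/

def Nf {m : ℕ} (a : Fin m → E2) (u v : E2) : ℝ := ∑ j, min (⟪a j, u⟫ ^ 2) (⟪a j, v⟫ ^ 2)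

lemma abs_sub_abs_sq (p q : ℝ) : (|p| - |q|) ^ 2 = min ((p - q) ^ 2) ((p + q) ^ 2) := by
  rcases le_total 0 p with hp | hp <;> rcases le_total 0 q with hq | hq <;>
  simp only [abs_of_nonneg, abs_of_nonpos, hp, hq] <;> symm
  · rw [min_eq_left]; nlinarith [mul_nonneg hp hq]
  · rw [min_eq_right]; · ring
    nlinarith [mul_nonneg hp (neg_nonneg.2 hq)]
  · rw [min_eq_right]; · ring
    nlinarith [mul_nonneg (neg_nonneg.2 hp) hq]
  · rw [min_eq_left]; · ring
    nlinarith [mul_nonneg (neg_nonneg.2 hp) (neg_nonneg.2 hq)]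

lemma phi_sq {m : ℕ} (a : Fin m → E2) (x y : E2) :
    ‖PhiMap a x - PhiMap a y‖ ^ 2 = Nf a (x - y) (x + y) := by
  rw [EuclideanSpace.norm_sq_eq]
  unfold Nf
  refine Finset.sum_congr rfl fun j _ => ?_
  rw [inner_sub_right, inner_add_right, ← abs_sub_abs_sq]
  simp [PhiMap]

lemma pdist_nonneg (x y : E2) : 0 ≤ pdist x y := le_min (norm_nonneg _) (norm_nonneg _)

lemma ratio_nonneg {m : ℕ} (a : Fin m → E2) : ∀ r ∈ ratioSet a, 0 ≤ r := by
  rintro r ⟨x, y, h, rfl⟩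
  exact div_nonneg (norm_nonneg _) (pdist_nonneg _ _)

lemma ratio_bddBelow {m : ℕ} (a : Fin m → E2) : BddBelow (ratioSet a) := ⟨0, ratio_nonneg a⟩

lemma ratio_mem {m : ℕ} (a : Fin m → E2) (u v : E2) (hu : ‖u‖ = 1) (hv : ‖v‖ = 1) :
    Real.sqrt (Nf a u v) ∈ ratioSet a := by
  set x : E2 := (1/2 : ℝ) • (u + v)
  set y : E2 := (1/2 : ℝ) • (v - u)
  have h1 : x - y = u := by simp only [x, y]; module
  have h2 : x + y = v := by simp only [x, y]; module
  have h3 : pdist x y = 1 := by simp [pdist, h1, h2, hu, hv]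
  refine ⟨x, y, by rw [h3]; norm_num, ?_⟩
  rw [h3, div_one, ← h1, ← h2, ← phi_sq, Real.sqrt_sq (norm_nonneg _)]

lemma ratio_ne {m : ℕ} (a : Fin m → E2) : (ratioSet a).Nonempty :=
  ⟨_, ratio_mem a _ _ unit_ex unit_ex⟩

lemma lipL_nonneg {m : ℕ} (a : Fin m → E2) : 0 ≤ lipL a := le_csInf (ratio_ne a) (ratio_nonneg a)

/-- upper bound from quadratic form bound -/
lemma ratio_le {m : ℕ} (a : Fin m → E2) (c : ℝ) (hc : 0 ≤ c)
    (h : ∀ u, ∑ j, ⟪a j, u⟫ ^ 2 ≤ c ^ 2 * ‖u‖ ^ 2) : ∀ r ∈ ratioSet a, r ≤ c := by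
  rintro r ⟨x, y, hd, rfl⟩
  have hpos : 0 < pdist x y := lt_of_le_of_ne (pdist_nonneg _ _) hd.symm
  rw [div_le_iff₀ hpos]
  refine (sq_le_sq₀ (norm_nonneg _) (by positivity)).1 ?_
  rw [phi_sq, mul_pow]
  unfold pdist
  rcases min_choice ‖x - y‖ ‖x + y‖ with h1 | h1 <;> rw [h1]
  · exact (Finset.sum_le_sum fun j _ => min_le_left _ _).trans (h _)
  · exact (Finset.sum_le_sum fun j _ => min_le_right _ _).trans (h _)

lemma ratio_bddAbove {m : ℕ} (a : Fin m → E2) : BddAbove (ratioSet a) := by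
  refine ⟨Real.sqrt (∑ j, ‖a j‖ ^ 2), ratio_le a _ (Real.sqrt_nonneg _) ?_⟩
  intro u
  rw [Real.sq_sqrt (Finset.sum_nonneg fun j _ => by positivity), Finset.sum_mul]
  refine Finset.sum_le_sum fun j _ => ?_
  rw [← mul_pow, ← sq_abs]
  exact pow_le_pow_left₀ (abs_nonneg _) (abs_real_inner_le_norm _ _) 2

lemma Nf_tight {m : ℕ} (b : Fin m → E2) (h0 : ∑ j, csq (b j) = 0) (u v : E2) (huv : ‖u‖ = ‖v‖) :
    Nf b u v = (Pf (fun j => csq (b j)) * ‖u‖ ^ 2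
      - (1/2) * Wf (fun j => csq (b j)) (csq u - csq v)) / 2 := by
  have h1 : ∀ w : E2, ∑ j, ⟪csq (b j), w⟫ = 0 := by
    intro w; rw [← sum_inner, h0, inner_zero_left]
  have h2 : Nf b u v = ∑ j, (‖csq (b j)‖ * ‖u‖ ^ 2 / 2
      + (1/4) * ⟪csq (b j), csq u + csq v⟫ - (1/4) * |⟪csq (b j), csq u - csq v⟫|) := by
    refine Finset.sum_congr rfl fun j _ => ?_
    rw [csq_inner, csq_inner, ← huv, inner_add_right, inner_sub_right]
    generalize ⟪csq (b j), csq u⟫ = p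
    generalize ⟪csq (b j), csq v⟫ = q
    rcases le_total p q with h | h
    · rw [min_eq_left (by linarith), abs_of_nonpos (by linarith)]; ring
    · rw [min_eq_right (by linarith), abs_of_nonneg (by linarith)]; ring
  rw [h2, Finset.sum_sub_distrib, Finset.sum_add_distrib, ← Finset.mul_sum, h1, ← Finset.mul_sum,
    ← Finset.sum_div, ← Finset.sum_mul]
  unfold Pf Wf
  ring

lemma tight_sum {m : ℕ} (b : Fin m → E2) (h0 : ∑ j, csq (b j) = 0) (u : E2) :
    ∑ j, ⟪b j, u⟫ ^ 2 = Pf (fun j => csq (b j)) / 2 * ‖u‖ ^ 2 := by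
  have := Nf_tight b h0 u u rfl
  simp only [Nf, min_self] at this
  rw [this]; simp [Wf]; ring

lemma lipU_tight {m : ℕ} (b : Fin m → E2) (h0 : ∑ j, csq (b j) = 0) :
    lipU b = Real.sqrt (Pf (fun j => csq (b j)) / 2) := by
  have hP : 0 ≤ Pf (fun j => csq (b j)) := Finset.sum_nonneg fun j _ => norm_nonneg _
  apply le_antisymm
  · apply csSup_le (ratio_ne b)
    apply ratio_le b _ (Real.sqrt_nonneg _)
    intro u
    rw [tight_sum b h0, Real.sq_sqrt (by positivity)]
  · apply le_csSup (ratio_bddAbove b)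
    have := ratio_mem b _ _ unit_ex unit_ex
    have h2 : Nf b (vec2 1 0) (vec2 1 0) = Pf (fun j => csq (b j)) / 2 := by
      simp only [Nf, min_self]
      rw [tight_sum b h0, unit_ex]; ring
    rwa [h2] at this

lemma Nf_scale {m : ℕ} (b : Fin m → E2) (u v : E2) (s t : ℝ) (hs : 0 ≤ s) (hs1 : s ≤ 1)
    (ht : 0 ≤ t) (ht1 : t ≤ 1) : Nf b (s • u) (t • v) ≤ Nf b u v := by
  refine Finset.sum_le_sum fun j _ => ?_
  rw [inner_smul_right, inner_smul_right, mul_pow, mul_pow]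
  apply min_le_min
  · exact mul_le_of_le_one_left (sq_nonneg _) (pow_le_one₀ hs hs1)
  · exact mul_le_of_le_one_left (sq_nonneg _) (pow_le_one₀ ht ht1)

lemma lipL_tight {m : ℕ} (b : Fin m → E2) (h0 : ∑ j, csq (b j) = 0) :
    lipL b = Real.sqrt ((Pf (fun j => csq (b j)) - Df (fun j => csq (b j))) / 2) := by
  set e := fun j => csq (b j) with he
  have hDP := Df_le_Pf e
  apply le_antisymm
  · apply Real.le_sqrt_of_sq_le
    have hD : Df e ≤ Pf e - 2 * lipL b ^ 2 := by
      apply Df_le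
      intro w hw
      obtain ⟨u, hu⟩ := csq_surj w
      obtain ⟨v, hv⟩ := csq_surj (-w)
      have hu1 : ‖u‖ = 1 := by
        have := csq_norm u
        rw [hu, hw] at this
        nlinarith [norm_nonneg u]
      have hv1 : ‖v‖ = 1 := by
        have := csq_norm v
        rw [hv, norm_neg, hw] at this
        nlinarith [norm_nonneg v]
      have h1 : lipL b ≤ Real.sqrt (Nf b u v) :=
        csInf_le (ratio_bddBelow b) (ratio_mem b u v hu1 hv1)
      have hN : 0 ≤ Nf b u v := Finset.sum_nonneg fun j _ => le_min (sq_nonneg _) (sq_nonneg _)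
      have h2 : lipL b ^ 2 ≤ Nf b u v := by
        rw [← Real.sq_sqrt hN]
        exact pow_le_pow_left₀ (lipL_nonneg b) h1 2
      rw [Nf_tight b h0 u v (by rw [hu1, hv1]), hu, hv, hu1] at h2
      have h3 : Wf e (w - -w) = 2 * Wf e w := by
        unfold Wf
        rw [Finset.mul_sum]
        refine Finset.sum_congr rfl fun j _ => ?_
        rw [sub_neg_eq_add, inner_add_right, ← two_mul, abs_mul, abs_two]
      rw [h3] at h2
      linarith
    linarith
  · apply le_csInf (ratio_ne b)
    rintro r ⟨x, y, hd, rfl⟩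
    have hpos : 0 < pdist x y := lt_of_le_of_ne (pdist_nonneg _ _) hd.symm
    rw [le_div_iff₀ hpos]
    refine (sq_le_sq₀ (by positivity) (norm_nonneg _)).1 ?_
    rw [phi_sq, mul_pow, Real.sq_sqrt (by linarith)]
    set u := x - y
    set v := x + y
    set ρ := pdist x y with hρ
    have hρu : ρ ≤ ‖u‖ := min_le_left _ _
    have hρv : ρ ≤ ‖v‖ := min_le_right _ _
    have hu : 0 < ‖u‖ := by linarith
    have hv : 0 < ‖v‖ := by linarith
    have h1 := Nf_scale b u v (ρ / ‖u‖) (ρ / ‖v‖) (by positivity) ((div_le_one hu).2 hρu)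
      (by positivity) ((div_le_one hv).2 hρv)
    have nu : ‖(ρ / ‖u‖) • u‖ = ρ := by
      rw [norm_smul, Real.norm_of_nonneg (by positivity)]; field_simp
    have nv : ‖(ρ / ‖v‖) • v‖ = ρ := by
      rw [norm_smul, Real.norm_of_nonneg (by positivity)]; field_simp
    rw [Nf_tight b h0 _ _ (by rw [nu, nv]), nu] at h1
    have h2 := Wf_le_Df e (csq ((ρ / ‖u‖) • u) - csq ((ρ / ‖v‖) • v))
    have h3 : ‖csq ((ρ / ‖u‖) • u) - csq ((ρ / ‖v‖) • v)‖ ≤ ρ ^ 2 + ρ ^ 2 := by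
      refine (norm_sub_le _ _).trans ?_
      rw [csq_norm, csq_norm, nu, nv]
    have h4 := mul_le_mul_of_nonneg_left h3 (Df_nonneg e)
    refine le_trans ?_ h1
    have h5 := h2.trans h4
    change (Pf e - Df e) / 2 * ρ ^ 2 ≤ (Pf e * ρ ^ 2 - 1/2 * Wf e _) / 2
    linarith

lemma condNum_tight {m : ℕ} (b : Fin m → E2) (h0 : ∑ j, csq (b j) = 0)
    (hP : 0 < Pf (fun j => csq (b j))) :
    condNum b = ENNReal.ofReal (1 - 2 * rRatio (fun j => csq (b j))) ^ (-(1 / 2) : ℝ) := by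
  rw [rR]
  unfold condNum
  rw [lipL_tight b h0, lipU_tight b h0]
  set P := Pf (fun j => csq (b j))
  set D := Df (fun j => csq (b j))
  have hDP : D ≤ P := Df_le_Pf _
  rcases hDP.eq_or_lt with h | h
  · rw [if_pos (by rw [h]; simp), h, div_self hP.ne']
    simp
  · have hpos : 0 < 1 - D / P := by rw [sub_pos, div_lt_one hP]; exact h
    rw [if_neg (Real.sqrt_pos.2 (by linarith)).ne', ENNReal.ofReal_rpow_of_pos hpos,
      Real.rpow_neg hpos.le, ← Real.sqrt_eq_rpow, ← Real.sqrt_div (by positivity), ← Real.sqrt_inv]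
    congr 2
    have : P - D ≠ 0 := by linarith
    field_simp

lemma sum_E2_apply {m : ℕ} (f : Fin m → E2) (i : Fin 2) : (∑ j, f j) i = ∑ j, f j i := by
  simp

lemma csq_sum_zero_iff {m : ℕ} (b : Fin m → E2) : ∑ j, csq (b j) = 0 ↔
    (∑ j, b j 0 ^ 2 = ∑ j, b j 1 ^ 2 ∧ ∑ j, b j 0 * b j 1 = 0) := by
  have h0 : (∑ j, csq (b j)) 0 = ∑ j, b j 0 ^ 2 - ∑ j, b j 1 ^ 2 := by
    rw [sum_E2_apply]; simp
  have h1 : (∑ j, csq (b j)) 1 = 2 * ∑ j, b j 0 * b j 1 := by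
    rw [sum_E2_apply, Finset.mul_sum]; simp [mul_assoc]
  constructor
  · intro h
    rw [h] at h0 h1
    simp at h0 h1
    exact ⟨by linarith, h1⟩
  · rintro ⟨h2, h3⟩
    apply E2_ext
    · rw [h0, h2]; simp
    · rw [h1, h3]; simp

lemma Pf_csq {m : ℕ} (b : Fin m → E2) :
    Pf (fun j => csq (b j)) = ∑ j, b j 0 ^ 2 + ∑ j, b j 1 ^ 2 := by
  unfold Pf
  rw [← Finset.sum_add_distrib]
  exact Finset.sum_congr rfl fun j _ => by rw [csq_norm, nsq]

lemma tight_iff {m : ℕ} (a : Fin m → E2) :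
    (∃ C : ℝ, 0 < C ∧ ∑ j, Matrix.vecMulVec (toFun2 (a j)) (toFun2 (a j)) =
          C • (1 : Matrix (Fin 2) (Fin 2) ℝ)) ↔
    (∑ j, csq (a j) = 0 ∧ 0 < Pf (fun j => csq (a j))) := by
  rw [csq_sum_zero_iff, Pf_csq]
  have hent : ∀ i k : Fin 2, (∑ j, Matrix.vecMulVec (toFun2 (a j)) (toFun2 (a j))) i k =
      ∑ j, a j i * a j k := by
    intro i k
    rw [Matrix.sum_apply]
    simp [Matrix.vecMulVec_apply, toFun2]
  constructor
  · rintro ⟨C, hC, h⟩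
    have h00 := hent 0 0
    have h01 := hent 0 1
    have h11 := hent 1 1
    rw [h] at h00 h01 h11
    simp at h00 h01 h11
    simp only [pow_two]
    rw [← h00, ← h01, ← h11]
    simp; exact hC
  · rintro ⟨⟨h1, h2⟩, h3⟩
    refine ⟨∑ j, a j 0 ^ 2, by linarith, ?_⟩
    ext i k
    rw [hent]
    fin_cases i <;> fin_cases k
    · simp [pow_two]
    · simpa using h2
    · simpa [mul_comm] using h2
    · simp only [Fin.mk_one, Fin.isValue, Matrix.smul_apply, Matrix.one_apply_eq, smul_eq_mul, mul_one]
      rw [h1]; simp [pow_two]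

lemma lipL_le {m : ℕ} (a : Fin m → E2) (x y : E2) :
    lipL a * pdist x y ≤ ‖PhiMap a x - PhiMap a y‖ := by
  by_cases hd : pdist x y = 0
  · rw [hd, mul_zero]; exact norm_nonneg _
  have hpos : 0 < pdist x y := lt_of_le_of_ne (pdist_nonneg _ _) (Ne.symm hd)
  rw [← le_div_iff₀ hpos]
  exact csInf_le (ratio_bddBelow a) ⟨x, y, hd, rfl⟩

lemma lipU_ge {m : ℕ} (a : Fin m → E2) (x y : E2) :
    ‖PhiMap a x - PhiMap a y‖ ≤ lipU a * pdist x y := by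
  by_cases hd : pdist x y = 0
  · rw [hd, mul_zero]
    have h := phi_sq a x y
    have h2 : Nf a (x - y) (x + y) = 0 := by
      have hz : x - y = 0 ∨ x + y = 0 := by
        unfold pdist at hd
        rcases min_choice ‖x - y‖ ‖x + y‖ with h1 | h1 <;> rw [h1] at hd
        · exact Or.inl (norm_eq_zero.1 hd)
        · exact Or.inr (norm_eq_zero.1 hd)
      refine Finset.sum_eq_zero fun j _ => ?_
      rcases hz with hz | hz <;> rw [hz] <;> simp <;> positivity
    rw [h2] at h
    exact (pow_eq_zero_iff two_ne_zero |>.1 h).le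
  have hpos : 0 < pdist x y := lt_of_le_of_ne (pdist_nonneg _ _) (Ne.symm hd)
  rw [← div_le_iff₀ hpos]
  exact le_csSup (ratio_bddAbove a) ⟨x, y, hd, rfl⟩

lemma phi_zero_sq {m : ℕ} (a : Fin m → E2) (x : E2) :
    ‖PhiMap a x - PhiMap a 0‖ ^ 2 = ∑ j, ⟪a j, x⟫ ^ 2 := by
  rw [phi_sq]; simp [Nf]

lemma pdist_zero (x : E2) : pdist x 0 = ‖x‖ := by simp [pdist]

lemma tighten {m : ℕ} (M : Fin m → E2) (hL : lipL M ≠ 0) :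
    ∃ b : Fin m → E2, ∑ j, csq (b j) = 0 ∧ 0 < Pf (fun j => csq (b j)) ∧
      condNum b ≤ condNum M := by
  have hLpos : 0 < lipL M := lt_of_le_of_ne (lipL_nonneg M) hL.symm
  have hUpos : 0 < lipU M :=
    lt_of_lt_of_le hLpos (csInf_le_csSup (ratio_ne M) (ratio_bddBelow M) (ratio_bddAbove M))
  have hlow : ∀ x : E2, lipL M ^ 2 * ‖x‖ ^ 2 ≤ ∑ j, ⟪M j, x⟫ ^ 2 := by
    intro x
    rw [← phi_zero_sq, ← mul_pow, ← pdist_zero]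
    exact pow_le_pow_left₀ (mul_nonneg hLpos.le (pdist_nonneg _ _)) (lipL_le M x 0) 2
  have hupp : ∀ x : E2, ∑ j, ⟪M j, x⟫ ^ 2 ≤ (lipU M * ‖x‖) ^ 2 := by
    intro x
    rw [← phi_zero_sq, ← pdist_zero]
    exact pow_le_pow_left₀ (norm_nonneg _) (lipU_ge M x 0) 2
  set p := ∑ j, M j 0 ^ 2 with hp
  set q := ∑ j, M j 0 * M j 1 with hq
  set r := ∑ j, M j 1 ^ 2 with hr
  have hquad : ∀ x : E2, ∑ j, ⟪M j, x⟫ ^ 2 = p * x 0 ^ 2 + 2 * q * (x 0 * x 1) + r * x 1 ^ 2 := by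
    intro x
    rw [hp, hq, hr, Finset.mul_sum, Finset.sum_mul, Finset.sum_mul, Finset.sum_mul,
      ← Finset.sum_add_distrib, ← Finset.sum_add_distrib]
    exact Finset.sum_congr rfl fun j _ => by rw [in2]; ring
  have hppos : 0 < p := by
    have := hlow (vec2 1 0)
    rw [hquad, unit_ex] at this
    simp at this
    nlinarith
  have hkpos : 0 < r - q ^ 2 / p := by
    have := hlow (vec2 (-(q / p)) 1)
    rw [hquad, nsq] at this
    simp at this
    have e1 : p * (q / p) ^ 2 + -(2 * q * (q / p)) + r = r - q ^ 2 / p := by field_simp; ring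
    rw [e1] at this
    refine lt_of_lt_of_le ?_ this
    positivity
  set s := Real.sqrt p with hs
  set k := Real.sqrt (r - q ^ 2 / p) with hk
  have hspos : 0 < s := Real.sqrt_pos.2 hppos
  have hkp : 0 < k := Real.sqrt_pos.2 hkpos
  have hs2 : s ^ 2 = p := Real.sq_sqrt hppos.le
  have hk2 : k ^ 2 = r - q ^ 2 / p := Real.sq_sqrt hkpos.le
  let T : E2 → E2 := fun x => vec2 (x 0 / s - q / p * (x 1 / k)) (x 1 / k)
  have Tadd : ∀ x y, T (x + y) = T x + T y := by
    intro x y; apply E2_ext <;> simp [T] <;> ring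
  have Tsub : ∀ x y, T (x - y) = T x - T y := by
    intro x y; apply E2_ext <;> simp [T] <;> ring
  have hTq : ∀ x, ∑ j, ⟪M j, T x⟫ ^ 2 = ‖x‖ ^ 2 := by
    intro x
    rw [hquad, nsq]
    simp only [T, vec2_0, vec2_1]
    have hr' : r = k ^ 2 + q ^ 2 / s ^ 2 := by rw [hs2, hk2]; ring
    rw [hr', ← hs2]
    field_simp
    ring
  have hTn : ∀ x, ‖x‖ ≤ lipU M * ‖T x‖ := by
    intro x
    have := hupp (T x)
    rw [hTq] at this
    exact (sq_le_sq₀ (norm_nonneg _) (by positivity)).1 this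
  let b : Fin m → E2 := fun j => vec2 (M j 0 / s) ((M j 1 - q / p * M j 0) / k)
  have hbT : ∀ j x, ⟪b j, x⟫ = ⟪M j, T x⟫ := by
    intro j x
    rw [in2, in2]; simp [b, T]; ring
  have hbq : ∀ x, ∑ j, ⟪b j, x⟫ ^ 2 = ‖x‖ ^ 2 := by
    intro x; rw [← hTq]; exact Finset.sum_congr rfl fun j _ => by rw [hbT]
  have hbquad : ∀ x : E2, (∑ j, b j 0 ^ 2) * x 0 ^ 2 + 2 * (∑ j, b j 0 * b j 1) * (x 0 * x 1)
      + (∑ j, b j 1 ^ 2) * x 1 ^ 2 = x 0 ^ 2 + x 1 ^ 2 := by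
    intro x
    rw [← nsq, ← hbq, Finset.mul_sum, Finset.sum_mul, Finset.sum_mul, Finset.sum_mul,
      ← Finset.sum_add_distrib, ← Finset.sum_add_distrib]
    exact Finset.sum_congr rfl fun j _ => by rw [in2]; ring
  have c1 := hbquad (vec2 1 0)
  have c2 := hbquad (vec2 0 1)
  have c3 := hbquad (vec2 1 1)
  simp only [vec2_0, vec2_1] at c1 c2 c3
  have htight : ∑ j, csq (b j) = 0 := by
    rw [csq_sum_zero_iff]
    constructor <;> linarith
  have hPb : Pf (fun j => csq (b j)) = 2 := by rw [Pf_csq]; linarith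
  refine ⟨b, htight, by rw [hPb]; norm_num, ?_⟩
  have hUb : lipU b = 1 := by rw [lipU_tight b htight, hPb]; simp
  have hPhi : ∀ x, PhiMap b x = PhiMap M (T x) := by
    intro x; simp only [PhiMap, hbT]
  have hLb : lipL M / lipU M ≤ lipL b := by
    apply le_csInf (ratio_ne b)
    rintro t ⟨x, y, hd, rfl⟩
    have hpos : 0 < pdist x y := lt_of_le_of_ne (pdist_nonneg _ _) hd.symm
    rw [le_div_iff₀ hpos, hPhi, hPhi]
    refine le_trans ?_ (lipL_le M (T x) (T y))
    rw [div_mul_eq_mul_div, mul_div_assoc]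
    apply mul_le_mul_of_nonneg_left _ hLpos.le
    rw [div_le_iff₀ hUpos]
    unfold pdist
    rw [← Tadd, ← Tsub, min_mul_of_nonneg _ _ hUpos.le]
    apply min_le_min
    · rw [mul_comm]; exact hTn _
    · rw [mul_comm]; exact hTn _
  have hq0 : 0 < lipL M / lipU M := div_pos hLpos hUpos
  unfold condNum
  rw [if_neg hL, if_neg (by linarith), hUb]
  apply ENNReal.ofReal_le_ofReal
  rw [div_le_div_iff₀ (by linarith) hLpos, one_mul]
  rw [div_le_iff₀ hUpos] at hLb
  linarith

lemma pow_antitone {g g' : ℝ} (hg : 0 ≤ 1 - g) :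
    ENNReal.ofReal (1 - g) ^ (-(1 / 2) : ℝ) ≤ ENNReal.ofReal (1 - g') ^ (-(1 / 2) : ℝ) ↔
      g ≤ g' := by
  rw [ENNReal.rpow_neg, ENNReal.rpow_neg, ENNReal.inv_le_inv,
    ENNReal.rpow_le_rpow_iff (by norm_num), ENNReal.ofReal_le_ofReal_iff hg]
  constructor <;> intro h <;> linarith

lemma r_le_iff {m : ℕ} (e e' : Fin m → E2) :
    rRatio e ≤ rRatio e' ↔ Df e / Pf e ≤ Df e' / Pf e' := by
  rw [← rR, ← rR]
  constructor <;> intro h <;> linarith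

lemma g_le_one {m : ℕ} (e : Fin m → E2) : 0 ≤ 1 - 2 * rRatio e := by
  rw [rR, sub_nonneg]
  exact div_le_one_of_le₀ (Df_le_Pf e) (Finset.sum_nonneg fun j _ => norm_nonneg _)

/-- For `a_1,…,a_m` in the upper half-plane
`T = {t·(cos φ, sin φ) : t ≥ 0, φ ∈ (0,π]}`, the family is an optimal tight frame (a tight
frame whose matrix attains the minimal condition number) if and only if the complex squares
`f(a_1),…,f(a_m)` form an optimal edge family (the edge vectors of an optimal strictly
convex `m`-gon); in either case `β_A = (1 − 2·r)^{−1/2}`. -/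
theorem stmt6 {m : ℕ} (hm : 3 ≤ m) (a : Fin m → E2)
    (hT : ∀ j, ∃ t φ : ℝ, 0 ≤ t ∧ 0 < φ ∧ φ ≤ π ∧
      a j = t • vec2 (Real.cos φ) (Real.sin φ)) :
    (((∃ C : ℝ, 0 < C ∧ ∑ j, Matrix.vecMulVec (toFun2 (a j)) (toFun2 (a j)) =
          C • (1 : Matrix (Fin 2) (Fin 2) ℝ)) ∧
        condNum a = ⨅ M : Fin m → E2, condNum M) ↔
      IsOptimalEdgeFamily (fun j => csq (a j))) ∧
    (IsOptimalEdgeFamily (fun j => csq (a j)) →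
      condNum a =
        ENNReal.ofReal (1 - 2 * rRatio (fun j => csq (a j))) ^ (-(1 / 2) : ℝ)) := by
  have hedgeP : ∀ e : Fin m → E2, IsEdgeFamily e → 0 < Pf e := by
    intro e he
    exact Finset.sum_pos (fun j _ => norm_pos_iff.2 (he.1 j)) ⟨⟨0, by omega⟩, Finset.mem_univ _⟩
  refine ⟨⟨?_, ?_⟩, ?_⟩
  · rintro ⟨ht, hopt⟩
    obtain ⟨h0, hP⟩ := (tight_iff a).1 ht
    have hmin : ∀ e' : Fin m → E2, ∑ l, e' l = 0 → 0 < Pf e' →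
        rRatio (fun j => csq (a j)) ≤ rRatio e' := by
      intro e' h0' hP'
      choose b hb using fun j => csq_surj (e' j)
      have hbe : (fun j => csq (b j)) = e' := funext hb
      have h1 : condNum a ≤ condNum b := by rw [hopt]; exact iInf_le _ b
      rw [condNum_tight a h0 hP, condNum_tight b (by simpa [hb] using h0') (by rwa [hbe]), hbe,
        pow_antitone (g_le_one _)] at h1
      linarith
    refine ⟨edge_of_min _ h0 hP fun e' h0' hP' => (r_le_iff _ _).1 (hmin e' h0' hP'), ?_⟩
    intro e' he'
    exact hmin e' he'.2.2 (hedgeP e' he')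
  · rintro ⟨he, hopt⟩
    have h0 := he.2.2
    have hP := hedgeP _ he
    refine ⟨(tight_iff a).2 ⟨h0, hP⟩, ?_⟩
    apply le_antisymm _ (iInf_le _ a)
    apply le_iInf
    intro M
    by_cases hL : lipL M = 0
    · simp [condNum, hL]
    obtain ⟨b, hb0, hbP, hbM⟩ := tighten M hL
    refine le_trans ?_ hbM
    rw [condNum_tight a h0 hP, condNum_tight b hb0 hbP, pow_antitone (g_le_one _)]
    obtain ⟨e, e0, eP, emin⟩ := exists_min hm
    have h1 := hopt e (edge_of_min e e0 eP emin)
    have h2 := (r_le_iff _ _).2 (emin _ hb0 hbP)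
    linarith
  · rintro ⟨he, -⟩
    exact condNum_tight a he.2.2 (hedgeP _ he)
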